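/- For any integer d ≥ 2, there exist a constant c > 0 and a threshold N such that for every n ≥ N there is a d-uniform hypergraph on n vertices that contains no copy of K_{2,...,2}^{(d)} and has at least c · n^{d - 1/⌈(2^d-1)/d⌉} edges. In other words, ex_d(n, K_{2,...,2}^{(d)}) = Ω(n^{d - ⌈(2^d-1)/d⌉^{-1}}). -/

import Mathlib

/-- A `d`-uniform hypergraph with edge set `E` on vertex set `Fin n` contains a copy of
`K_{2,…,2}^{(d)}`: there are `2d` distinct vertices `a_1, b_1, …, a_d, b_d` such that all
`2^d` sets `{c_1, …, c_d}` with `c_j ∈ {a_j, b_j}` are edges. -/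
def HasBox (d n : ℕ) (E : Finset (Finset (Fin n))) : Prop :=
  ∃ a b : Fin d → Fin n,
    Function.Injective (fun p : Fin d × Bool => if p.2 then b p.1 else a p.1) ∧
    ∀ ε : Fin d → Bool,
      (Finset.image (fun j => if ε j then b j else a j) Finset.univ) ∈ E

/-!
Let `s = ⌈(2 ^ d - 1) / d⌉`, so that `d * s ≤ 2 ^ d + d - 2`, and let `q` be a prime with `q ^ s` of
order `n`. Take `d` disjoint vertex classes, each a copy of `V = F_q ^ s`, a uniformly random
multilinear form `T : V × ⋯ × V → F_q`, and as edges the tuples `v` with `T v = 1`. About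
`q ^ (d * s - 1)` edges are expected, which is of order `n ^ (d - 1 / s)`.

If `T = 1` on all vertices of a box `∏ i, {v i, w i}` with `v i ≠ w i`, then each pair `v i, w i`
is linearly independent. For such pairs the `2 ^ d` values of `T` are independent and uniform, so a
given box occurs with probability at most `q ^ (-2 ^ d)`. Moreover, by multilinearity, `T = 1` on
the whole product of the `d` lines through the pairs, so a point lying in one box lies in at least
`(q - 1) ^ d` of them. Hence at most `q ^ (2 * d * s - 2 ^ d) / (q - 1) ^ d = O(q ^ (d * s - 2))`
edges are expected to lie in some box, and deleting them leaves a box-free hypergraph with a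
constant proportion of the edges. Expectations appear as sums over the finite space of all
multilinear forms.
-/

/-- The points `v` and `w` are opposite vertices of a nondegenerate combinatorial box
`∏ i, {v i, w i}` all of whose vertices lie in `S`. -/
def SpansBox {ι : Type*} {A : ι → Type*} (S : Set (∀ i, A i)) (v w : ∀ i, A i) : Prop :=
  (∀ i, v i ≠ w i) ∧ Set.univ.pi (fun i ↦ {v i, w i}) ⊆ S

theorem SpansBox.mono {ι : Type*} {A : ι → Type*} {S S' : Set (∀ i, A i)} {v w : ∀ i, A i}
    (h : SpansBox S v w) (hS : S ⊆ S') : SpansBox S' v w :=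
  ⟨h.1, h.2.trans hS⟩

theorem SpansBox.left_mem {ι : Type*} {A : ι → Type*} {S : Set (∀ i, A i)} {v w : ∀ i, A i}
    (h : SpansBox S v w) : v ∈ S :=
  h.2 fun _ _ ↦ Set.mem_insert _ _

/-! ### Multilinear maps that are constant on a box -/

section ConstantOnBox

open Finset

theorem map_lineMap_eq_of_eqOn_box {R ι N : Type*} {V : ι → Type*} [CommRing R] [Finite ι]
    [∀ i, AddCommGroup (V i)] [∀ i, Module R (V i)] [AddCommGroup N] [Module R N]
    {T : MultilinearMap R V N} {a : N} {v w : ∀ i, V i}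
    (h : Set.univ.pi (fun i ↦ {v i, w i}) ⊆ T ⁻¹' {a}) (c : ι → R) :
    T (fun i ↦ AffineMap.lineMap (v i) (w i) (c i)) = a := by
  classical
  have := Fintype.ofFinite ι
  have hvertex (s : Finset ι) :
      T (s.piecewise (fun i ↦ (1 - c i) • v i) (fun i ↦ c i • w i)) =
        ((∏ i ∈ s, (1 - c i)) * ∏ i ∈ univ \ s, c i) • a := by
    have hsmul : s.piecewise (fun i ↦ (1 - c i) • v i) (fun i ↦ c i • w i) =
        fun i ↦ s.piecewise (fun i ↦ 1 - c i) c i • s.piecewise v w i := by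
      ext i
      by_cases hi : i ∈ s <;> simp [hi]
    have hbox : T (s.piecewise v w) = a := h fun i _ ↦ by
      by_cases hi : i ∈ s <;> simp [hi]
    rw [hsmul, T.map_smul_univ, hbox, prod_piecewise, univ_inter]
  calc T (fun i ↦ AffineMap.lineMap (v i) (w i) (c i))
      = T ((fun i ↦ (1 - c i) • v i) + fun i ↦ c i • w i) := by
        simp only [AffineMap.lineMap_apply_module, Pi.add_def]
    _ = (∏ i, (1 - c i + c i)) • a := by
        simp_rw [T.map_add_univ, hvertex, ← sum_smul, prod_add, powerset_univ]
    _ = a := by simp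

variable {F ι : Type*} {V : ι → Type*} [Field F] [∀ i, AddCommGroup (V i)] [∀ i, Module F (V i)]
  {T : MultilinearMap F V F} {a : F} {v w : ∀ i, V i}

theorem SpansBox.lineMap [Finite ι] (h : SpansBox (T ⁻¹' {a}) v w) {c : ι → F}
    (hc : ∀ i, c i ≠ 0) :
    SpansBox (T ⁻¹' {a}) v (fun i ↦ AffineMap.lineMap (v i) (w i) (c i)) := by
  refine ⟨fun i hi ↦ ?_, fun x hx ↦ ?_⟩
  · exact (AffineMap.lineMap_eq_left_iff.1 hi.symm).elim (h.1 i) (hc i)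
  · have hline (i : ι) : ∃ r : F, x i = AffineMap.lineMap (v i) (w i) r := by
      rcases hx i trivial with hi | hi
      · exact ⟨0, by rw [hi, AffineMap.lineMap_apply_zero]⟩
      · exact ⟨c i, hi⟩
    choose r hr using hline
    rw [funext hr]
    exact map_lineMap_eq_of_eqOn_box h.2 r

open scoped Classical in
theorem SpansBox.pow_card_sub_one_le_card [Fintype F] [Fintype ι] [∀ i, Fintype (V i)]
    (h : SpansBox (T ⁻¹' {a}) v w) :
    (Fintype.card F - 1) ^ Fintype.card ι ≤ #{w | SpansBox (T ⁻¹' {a}) v w} := by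
  calc (Fintype.card F - 1) ^ Fintype.card ι = #(univ : Finset (ι → Fˣ)) := by
        simp [Fintype.card_units]
    _ ≤ #{w | SpansBox (T ⁻¹' {a}) v w} :=
        card_le_card_of_injOn (fun c i ↦ AffineMap.lineMap (v i) (w i) (c i : F))
          (fun c _ ↦ by simpa using h.lineMap fun i ↦ (c i).ne_zero)
          fun c _ c' _ hcc' ↦ funext fun i ↦
            Units.ext (AffineMap.lineMap_injective F (h.1 i) (congrFun hcc' i))

open scoped Classical in
theorem pow_mul_card_exists_spansBox_le_card_prod [Fintype F] [Fintype ι] [∀ i, Fintype (V i)]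
    (T : MultilinearMap F V F) (a : F) :
    (Fintype.card F - 1) ^ Fintype.card ι * #{v | ∃ w, SpansBox (T ⁻¹' {a}) v w} ≤
      #{p : (∀ i, V i) × ∀ i, V i | SpansBox (T ⁻¹' {a}) p.1 p.2} := by
  set pairs : Finset ((∀ i, V i) × ∀ i, V i) := {p | SpansBox (T ⁻¹' {a}) p.1 p.2}
  have himage : ({v | ∃ w, SpansBox (T ⁻¹' {a}) v w} : Finset _) = pairs.image Prod.fst := by
    ext v; simp [pairs]
  rw [himage]
  refine mul_card_image_le_card _ _ fun v hv ↦ ?_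
  obtain ⟨⟨v, w⟩, hvw, rfl⟩ := mem_image.1 hv
  refine (mem_filter.1 hvw).2.pow_card_sub_one_le_card.trans ?_
  exact card_le_card_of_injOn (Prod.mk v) (fun w hw ↦ by simpa [pairs] using hw)
    (Prod.mk_right_injective v).injOn

theorem SpansBox.linearIndependent (ha : a ≠ 0) (h : SpansBox (T ⁻¹' {a}) v w) (i : ι) :
    LinearIndependent F ![v i, w i] := by
  classical
  have hv : T.toLinearMap v i (v i) = a := by
    simpa using h.left_mem
  have hw : T.toLinearMap v i (w i) = a := h.2 fun j _ ↦ by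
    obtain rfl | hj := eq_or_ne j i <;> simp [*]
  refine LinearIndependent.pair_iff.2 fun r t hrt ↦ ?_
  have hsum : r + t = 0 := by
    have := congrArg (T.toLinearMap v i) hrt
    rw [map_add, map_smul, map_smul, hv, hw, map_zero, ← add_smul] at this
    exact (smul_eq_zero.1 this).resolve_right ha
  obtain rfl : r = -t := eq_neg_of_add_eq_zero_left hsum
  have ht : t • (w i - v i) = 0 := by rw [← hrt]; module
  have ht0 : t = 0 := (smul_eq_zero.1 ht).resolve_right (sub_ne_zero.2 (h.1 i).symm)
  simp [ht0]

end ConstantOnBox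

/-! ### Random multilinear forms -/

section RandomForm

open Finset

theorem card_filter_eq_mul_card_of_surjective {G H : Type*} [AddGroup G] [AddGroup H]
    [Fintype G] [Fintype H] [DecidableEq H] {f : G →+ H} (hf : Function.Surjective f) (y : H) :
    #{g | f g = y} * Fintype.card H = Fintype.card G := by
  calc #{g | f g = y} * Fintype.card H = ∑ z, #{g | f g = z} := by
        rw [sum_congr rfl fun z _ ↦ AddMonoidHom.card_fiber_eq_of_mem_range f (hf z) (hf y)]
        simp [mul_comm]
    _ = Fintype.card G := (card_eq_sum_card_fiberwise fun _ _ ↦ mem_coe.2 (mem_univ _)).symm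

open scoped Classical in
theorem prod_card_le_two_pow_mul_card_forall_ne_zero {ι : Type*} {A : ι → Type*} [Fintype ι]
    [∀ i, Fintype (A i)] [∀ i, Nontrivial (A i)] [∀ i, Zero (A i)] :
    ∏ i, Fintype.card (A i) ≤ 2 ^ Fintype.card ι * #{v : ∀ i, A i | ∀ i, v i ≠ 0} := by
  have hpi : ({v : ∀ i, A i | ∀ i, v i ≠ 0} : Finset _) =
      Fintype.piFinset fun i ↦ univ.erase 0 := by
    ext v; simp
  rw [hpi, Fintype.card_piFinset, ← card_univ, ← prod_const, ← prod_mul_distrib]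
  gcongr with i
  have := Fintype.one_lt_card (α := A i)
  rw [card_erase_of_mem (mem_univ _), card_univ]
  omega

variable {F ι : Type*} {V : ι → Type*} [Field F]
  [∀ i, AddCommGroup (V i)] [∀ i, Module F (V i)]

theorem exists_multilinearMap_forall_apply_eq [Finite ι] {κ : ι → Type*} [∀ i, Finite (κ i)]
    {u : ∀ i, κ i → V i} (hu : ∀ i, LinearIndependent F (u i)) (y : (∀ i, κ i) → F) :
    ∃ T : MultilinearMap F V F, ∀ k, T (fun i ↦ u i (k i)) = y k := by
  classical
  have := Fintype.ofFinite ι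
  have := fun i ↦ Fintype.ofFinite (κ i)
  have hdual (i : ι) : ∃ g : V i →ₗ[F] (κ i →₀ F), ∀ k, g (u i k) = Finsupp.single k 1 := by
    obtain ⟨g, hg⟩ := LinearMap.exists_leftInverse_of_injective
      (Finsupp.linearCombination F (u i)) (LinearMap.ker_eq_bot.2 (hu i))
    exact ⟨g, fun k ↦ by simpa using LinearMap.congr_fun hg (Finsupp.single k 1)⟩
  choose g hg using hdual
  let indicator (l : ∀ i, κ i) : MultilinearMap F V F :=
    (MultilinearMap.mkPiAlgebra F ι F).compLinearMap fun i ↦ Finsupp.lapply (l i) ∘ₗ g i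
  have hindicator (l k : ∀ i, κ i) :
      indicator l (fun i ↦ u i (k i)) = if k = l then 1 else 0 := by
    simp [indicator, hg, Finsupp.single_apply, prod_ite_zero, funext_iff]
  exact ⟨∑ l, y l • indicator l, fun k ↦ by simp [hindicator]⟩

variable [Fintype F] [Fintype (MultilinearMap F V F)]

open scoped Classical in
theorem card_filter_forall_apply_eq_mul_pow [Fintype ι] {κ : ι → Type*} [∀ i, Fintype (κ i)]
    {u : ∀ i, κ i → V i} (hu : ∀ i, LinearIndependent F (u i)) (y : (∀ i, κ i) → F) :
    #{T : MultilinearMap F V F | ∀ k, T (fun i ↦ u i (k i)) = y k} *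
      Fintype.card F ^ (∏ i, Fintype.card (κ i)) = Fintype.card (MultilinearMap F V F) := by
  let eval : MultilinearMap F V F →+ ((∀ i, κ i) → F) :=
    { toFun := fun T k ↦ T fun i ↦ u i (k i)
      map_zero' := rfl
      map_add' := fun _ _ ↦ rfl }
  have heval : Function.Surjective eval := fun y ↦
    (exists_multilinearMap_forall_apply_eq hu y).imp fun _ ↦ funext
  simpa [eval, funext_iff] using card_filter_eq_mul_card_of_surjective heval y

open scoped Classical in
theorem card_filter_apply_eq_mul_card [Finite ι] {v : ∀ i, V i} (hv : ∀ i, v i ≠ 0) (a : F) :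
    #{T : MultilinearMap F V F | T v = a} * Fintype.card F =
      Fintype.card (MultilinearMap F V F) := by
  have := Fintype.ofFinite ι
  simpa using card_filter_forall_apply_eq_mul_pow (κ := fun _ ↦ Unit) (u := fun i _ ↦ v i)
    (fun i ↦ LinearIndependent.of_subsingleton () (hv i)) fun _ ↦ a

open scoped Classical in
theorem card_filter_spansBox_mul_pow_le [Fintype ι] {a : F} (ha : a ≠ 0) (v w : ∀ i, V i) :
    #{T : MultilinearMap F V F | SpansBox (T ⁻¹' {a}) v w} *
      Fintype.card F ^ 2 ^ Fintype.card ι ≤ Fintype.card (MultilinearMap F V F) := by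
  by_cases hex : ∃ T : MultilinearMap F V F, SpansBox (T ⁻¹' {a}) v w
  · obtain ⟨T₀, hT₀⟩ := hex
    have hcard := card_filter_forall_apply_eq_mul_pow (κ := fun _ ↦ Fin 2)
      (hT₀.linearIndependent ha) fun _ ↦ a
    simp only [Fintype.card_fin, prod_const, card_univ] at hcard
    rw [← hcard]
    gcongr with T
    intro hT k
    refine hT.2 fun i _ ↦ ?_
    generalize k i = b
    fin_cases b <;> simp
  · push Not at hex
    simp [hex]

variable [Fintype ι] [∀ i, Fintype (V i)]

open scoped Classical in
theorem card_forall_ne_zero_mul_card_le_mul_sum_card_apply_eq (a : F) :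
    #{v : ∀ i, V i | ∀ i, v i ≠ 0} * Fintype.card (MultilinearMap F V F) ≤
      Fintype.card F * ∑ T : MultilinearMap F V F, #{v | T v = a} := by
  calc #{v : ∀ i, V i | ∀ i, v i ≠ 0} * Fintype.card (MultilinearMap F V F)
      = ∑ v : ∀ i, V i with ∀ i, v i ≠ 0,
          #{T : MultilinearMap F V F | T v = a} * Fintype.card F := by
        rw [← smul_eq_mul, ← sum_const]
        exact sum_congr rfl fun v hv ↦
          (card_filter_apply_eq_mul_card (mem_filter.1 hv).2 a).symm
    _ ≤ ∑ v, #{T : MultilinearMap F V F | T v = a} * Fintype.card F :=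
        sum_le_sum_of_subset (subset_univ _)
    _ = Fintype.card F * ∑ T : MultilinearMap F V F, #{v | T v = a} := by
        rw [← sum_mul, mul_comm]
        congr 1
        exact (sum_card_bipartiteAbove_eq_sum_card_bipartiteBelow
          fun (T : MultilinearMap F V F) v ↦ T v = a).symm

open scoped Classical in
theorem prod_card_mul_card_le_mul_sum_card_apply_eq [∀ i, Nontrivial (V i)] (a : F) :
    (∏ i, Fintype.card (V i)) * Fintype.card (MultilinearMap F V F) ≤
      2 ^ Fintype.card ι * Fintype.card F * ∑ T : MultilinearMap F V F, #{v | T v = a} := by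
  calc (∏ i, Fintype.card (V i)) * Fintype.card (MultilinearMap F V F)
      ≤ 2 ^ Fintype.card ι * #{v : ∀ i, V i | ∀ i, v i ≠ 0} *
          Fintype.card (MultilinearMap F V F) := by
        gcongr
        exact prod_card_le_two_pow_mul_card_forall_ne_zero
    _ ≤ 2 ^ Fintype.card ι * Fintype.card F *
          ∑ T : MultilinearMap F V F, #{v | T v = a} := by
        rw [mul_assoc, mul_assoc]
        exact Nat.mul_le_mul_left _ (card_forall_ne_zero_mul_card_le_mul_sum_card_apply_eq a)

open scoped Classical in
theorem mul_sum_card_exists_spansBox_le {a : F} (ha : a ≠ 0) :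
    (Fintype.card F - 1) ^ Fintype.card ι * Fintype.card F ^ 2 ^ Fintype.card ι *
        ∑ T : MultilinearMap F V F, #{v | ∃ w, SpansBox (T ⁻¹' {a}) v w} ≤
      (∏ i, Fintype.card (V i)) ^ 2 * Fintype.card (MultilinearMap F V F) := by
  calc _ = Fintype.card F ^ 2 ^ Fintype.card ι * ∑ T : MultilinearMap F V F,
          (Fintype.card F - 1) ^ Fintype.card ι * #{v | ∃ w, SpansBox (T ⁻¹' {a}) v w} := by
        rw [← mul_sum]; ring
    _ ≤ Fintype.card F ^ 2 ^ Fintype.card ι * ∑ T : MultilinearMap F V F,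
          #{p : (∀ i, V i) × ∀ i, V i | SpansBox (T ⁻¹' {a}) p.1 p.2} := by
        gcongr with T
        exact pow_mul_card_exists_spansBox_le_card_prod T a
    _ = ∑ p : (∀ i, V i) × ∀ i, V i,
          #{T : MultilinearMap F V F | SpansBox (T ⁻¹' {a}) p.1 p.2} *
            Fintype.card F ^ 2 ^ Fintype.card ι := by
        rw [← sum_mul, mul_comm]
        congr 1
        exact sum_card_bipartiteAbove_eq_sum_card_bipartiteBelow
          fun (T : MultilinearMap F V F) (p : (∀ i, V i) × ∀ i, V i) ↦
            SpansBox (T ⁻¹' {a}) p.1 p.2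
    _ ≤ ∑ _p : (∀ i, V i) × ∀ i, V i, Fintype.card (MultilinearMap F V F) := by
        gcongr with p
        exact card_filter_spansBox_mul_pow_le ha p.1 p.2
    _ = (∏ i, Fintype.card (V i)) ^ 2 * Fintype.card (MultilinearMap F V F) := by
        simp [sq]

open scoped Classical in
theorem sq_mul_sum_card_exists_spansBox_le {a : F} (ha : a ≠ 0)
    (hV : (∏ i, Fintype.card (V i)) * Fintype.card F ^ 2 ≤
      Fintype.card F ^ (2 ^ Fintype.card ι + Fintype.card ι)) :
    Fintype.card F ^ 2 * ∑ T : MultilinearMap F V F, #{v | ∃ w, SpansBox (T ⁻¹' {a}) v w} ≤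
      2 ^ Fintype.card ι * ((∏ i, Fintype.card (V i)) * Fintype.card (MultilinearMap F V F)) := by
  have hcount := mul_sum_card_exists_spansBox_le (V := V) ha
  have hF := Fintype.one_lt_card (α := F)
  have hpos : 0 < ∏ i, Fintype.card (V i) := prod_pos fun _ _ ↦ Fintype.card_pos
  set q := Fintype.card F
  set d := Fintype.card ι
  set N := ∏ i, Fintype.card (V i)
  set y := ∑ T : MultilinearMap F V F, #{v | ∃ w, SpansBox (T ⁻¹' {a}) v w}
  have hq : q ≤ 2 * (q - 1) := by omega
  refine Nat.le_of_mul_le_mul_left ?_ hpos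
  calc N * (q ^ 2 * y) = N * q ^ 2 * y := by ring
    _ ≤ q ^ (2 ^ d + d) * y := by gcongr
    _ = q ^ d * q ^ 2 ^ d * y := by ring
    _ ≤ (2 * (q - 1)) ^ d * q ^ 2 ^ d * y := by gcongr
    _ = 2 ^ d * ((q - 1) ^ d * q ^ 2 ^ d * y) := by ring
    _ ≤ 2 ^ d * (N ^ 2 * Fintype.card (MultilinearMap F V F)) := by gcongr
    _ = N * (2 ^ d * (N * Fintype.card (MultilinearMap F V F))) := by ring

open scoped Classical in
theorem card_mul_add_mul_sum_card_exists_spansBox_le [∀ i, Nontrivial (V i)] {a : F} (ha : a ≠ 0)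
    (hV : (∏ i, Fintype.card (V i)) * Fintype.card F ^ 2 ≤
      Fintype.card F ^ (2 ^ Fintype.card ι + Fintype.card ι))
    (hF : 2 * 4 ^ Fintype.card ι ≤ Fintype.card F) :
    Fintype.card (MultilinearMap F V F) * ∏ i, Fintype.card (V i) +
        2 ^ (Fintype.card ι + 1) * Fintype.card F *
          ∑ T : MultilinearMap F V F, #{v | ∃ w, SpansBox (T ⁻¹' {a}) v w} ≤
      2 ^ (Fintype.card ι + 1) * Fintype.card F *
        ∑ T : MultilinearMap F V F, #{v | T v = a} := by
  have hx := prod_card_mul_card_le_mul_sum_card_apply_eq (V := V) a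
  have hy := sq_mul_sum_card_exists_spansBox_le ha hV
  have hpos : 0 < Fintype.card F := Fintype.card_pos
  set q := Fintype.card F
  set d := Fintype.card ι
  set M := (∏ i, Fintype.card (V i)) * Fintype.card (MultilinearMap F V F)
  set x := ∑ T : MultilinearMap F V F, #{v | T v = a}
  set y := ∑ T : MultilinearMap F V F, #{v | ∃ w, SpansBox (T ⁻¹' {a}) v w}
  have hy' : 2 ^ (d + 1) * q * y ≤ M := by
    refine Nat.le_of_mul_le_mul_left ?_ hpos
    calc q * (2 ^ (d + 1) * q * y) = 2 ^ (d + 1) * (q ^ 2 * y) := by ring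
      _ ≤ 2 ^ (d + 1) * (2 ^ d * M) := by gcongr
      _ = 2 * 4 ^ d * M := by rw [show 4 = 2 * 2 from rfl, mul_pow]; ring
      _ ≤ q * M := by gcongr
  calc _ = M + 2 ^ (d + 1) * q * y := by rw [mul_comm (Fintype.card (MultilinearMap F V F))]
    _ ≤ 2 * M := by omega
    _ ≤ 2 * (2 ^ d * q * x) := by gcongr
    _ = 2 ^ (d + 1) * q * x := by ring

end RandomForm

section Deletion

open Finset

theorem exists_le_mul_card_sdiff {Ω α : Type*} [Fintype Ω] [Nonempty Ω] [DecidableEq α]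
    {X Y : Ω → Finset α} {k m : ℕ}
    (h : Fintype.card Ω * k + m * ∑ ω, #(Y ω) ≤ m * ∑ ω, #(X ω)) :
    ∃ ω, k ≤ m * #(X ω \ Y ω) := by
  have hsum : ∑ ω, (k + m * #(Y ω)) ≤ ∑ ω, m * #(X ω) := by
    simpa [sum_add_distrib, mul_sum] using h
  obtain ⟨ω, -, hω⟩ := exists_le_of_sum_le univ_nonempty hsum
  refine ⟨ω, Nat.le_of_add_le_add_right (b := m * #(Y ω)) (hω.trans ?_)⟩
  rw [← mul_add]
  exact Nat.mul_le_mul_left m (tsub_le_iff_right.1 (le_card_sdiff _ _))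

theorem exists_finset_forall_not_spansBox {F ι : Type*} {V : ι → Type*} [Field F] [Fintype F]
    [Fintype ι] [∀ i, AddCommGroup (V i)] [∀ i, Module F (V i)]
    [∀ i, Fintype (V i)] [∀ i, Nontrivial (V i)]
    (hV : (∏ i, Fintype.card (V i)) * Fintype.card F ^ 2 ≤
      Fintype.card F ^ (2 ^ Fintype.card ι + Fintype.card ι))
    (hF : 2 * 4 ^ Fintype.card ι ≤ Fintype.card F) :
    ∃ S : Finset (∀ i, V i), (∀ v w, ¬ SpansBox (S : Set (∀ i, V i)) v w) ∧
      ∏ i, Fintype.card (V i) ≤ 2 ^ (Fintype.card ι + 1) * Fintype.card F * #S := by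
  classical
  have : Finite (MultilinearMap F V F) := Module.finite_of_finite F
  have := Fintype.ofFinite (MultilinearMap F V F)
  obtain ⟨T, hT⟩ := exists_le_mul_card_sdiff
    (card_mul_add_mul_sum_card_exists_spansBox_le (V := V) (one_ne_zero' F) hV hF)
  refine ⟨_, fun v w hvw ↦ ?_, hT⟩
  have hT_eq_one := hvw.mono (S' := T ⁻¹' {1}) fun v hv ↦ by
    simpa using (mem_sdiff.1 hv).1
  exact (mem_sdiff.1 hvw.left_mem).2 (mem_filter.2 ⟨mem_univ _, w, hT_eq_one⟩)

end Deletion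

/-! ### From tuples to hypergraphs -/

section Transversal

open Finset

theorem eq_of_surjective_update {α β : Type*} [DecidableEq α] {f : α → β}
    (hf : Function.Injective f) {i : α} {b : β}
    (h : Function.Surjective (Function.update f i b)) : b = f i := by
  obtain ⟨j, hj⟩ := h (f i)
  obtain rfl | hji := eq_or_ne j i
  · rwa [Function.update_self] at hj
  · rw [Function.update_of_ne hji] at hj
    exact absurd (hf hj) hji

variable {ι A α : Type*} [Fintype ι] [DecidableEq α] {φ : ι × A ↪ α}

/-- The edge determined by a tuple `v` in the complete `ι`-partite hypergraph whose parts are the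
images of `{i} × A` under `φ`. -/
def transversal (φ : ι × A ↪ α) (v : ι → A) : Finset α :=
  univ.image fun i ↦ φ (i, v i)

theorem mem_transversal {v : ι → A} {i : ι} {x : A} : φ (i, x) ∈ transversal φ v ↔ v i = x := by
  simp [transversal]

theorem transversal_injective (φ : ι × A ↪ α) : Function.Injective (transversal φ) :=
  fun _ _ h ↦ funext fun _ ↦
    (mem_transversal.1 (h ▸ mem_transversal.2 rfl)).symm

theorem card_transversal (φ : ι × A ↪ α) (v : ι → A) : #(transversal φ v) = Fintype.card ι :=
  card_image_of_injective _ fun _ _ h ↦ congrArg Prod.fst (φ.injective h)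

theorem surjective_fst_of_image_eq_transversal {κ : Type*} [Fintype κ] {c : κ → ι × A} {v : ι → A}
    (h : univ.image (fun k ↦ φ (c k)) = transversal φ v) :
    Function.Surjective fun k ↦ (c k).1 := fun i ↦ by
  obtain ⟨k, -, hk⟩ := mem_image.1 (h ▸ mem_transversal.2 rfl : φ (i, v i) ∈ _)
  exact ⟨k, congrArg Prod.fst (φ.injective hk)⟩

theorem exists_boxVertices_of_hasBox_image_transversal {d n : ℕ} {φ : Fin d × A ↪ Fin n}
    {S : Finset (Fin d → A)} (h : HasBox d n (S.image (transversal φ))) :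
    ∃ a b : Fin d → Fin d × A, (∀ i, a i ≠ b i) ∧ ∀ ε : Fin d → Bool,
      univ.image (fun i ↦ φ (if ε i then b i else a i)) ∈ S.image (transversal φ) := by
  obtain ⟨a, b, hinj, hE⟩ := h
  have hrange (ε : Fin d → Bool) (i : Fin d) : ∃ p, φ p = if ε i then b i else a i := by
    obtain ⟨v, -, hv⟩ := mem_image.1 (hE ε)
    have hi : (if ε i then b i else a i) ∈ transversal φ v :=
      hv ▸ mem_image_of_mem _ (mem_univ i)
    obtain ⟨j, -, hj⟩ := mem_image.1 hi
    exact ⟨_, hj⟩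
  choose a' ha' using fun i ↦ hrange (fun _ ↦ false) i
  choose b' hb' using fun i ↦ hrange (fun _ ↦ true) i
  simp only [Bool.false_eq_true, if_false, if_true] at ha' hb'
  refine ⟨a', b', fun i hi ↦ ?_, fun ε ↦ by simpa only [apply_ite φ, ha', hb'] using hE ε⟩
  have hab : a i = b i := by rw [← ha', ← hb', hi]
  simpa using @hinj (i, false) (i, true) hab

theorem not_hasBox_image_transversal {d n : ℕ} (φ : Fin d × A ↪ Fin n) {S : Finset (Fin d → A)}
    (hS : ∀ v w, ¬ SpansBox (S : Set (Fin d → A)) v w) :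
    ¬ HasBox d n (S.image (transversal φ)) := fun h ↦ by
  classical
  obtain ⟨a, b, hab, hE⟩ := exists_boxVertices_of_hasBox_image_transversal h
  have hsurj (ε : Fin d → Bool) : Function.Surjective fun i ↦ (if ε i then b i else a i).1 := by
    obtain ⟨v, -, hv⟩ := mem_image.1 (hE ε)
    exact surjective_fst_of_image_eq_transversal hv.symm
  have hσ : Function.Bijective fun i ↦ (a i).1 :=
    Function.Surjective.bijective_of_finite (by simpa using hsurj fun _ ↦ false)
  -- Replacing the single vertex `a i` by `b i` frees only the part of `a i`.
  have hpart (i : Fin d) : (b i).1 = (a i).1 := by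
    refine eq_of_surjective_update hσ.1 (i := i) ?_
    convert hsurj fun j ↦ decide (j = i) using 2 with j
    obtain rfl | hj := eq_or_ne j i <;> simp [*]
  let σ := Equiv.ofBijective _ hσ
  let v : Fin d → A := fun i ↦ (a (σ.symm i)).2
  let w : Fin d → A := fun i ↦ (b (σ.symm i)).2
  have ha (i : Fin d) : a i = (σ i, v (σ i)) := Prod.ext rfl (by simp [v])
  have hb (i : Fin d) : b i = (σ i, w (σ i)) := Prod.ext (hpart i) (by simp [w])
  refine hS v w ⟨fun i hi ↦ hab (σ.symm i) ?_, fun x hx ↦ ?_⟩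
  · rw [ha, hb, σ.apply_symm_apply, hi]
  · have hx' (i : Fin d) :
        (if decide (x (σ i) = w (σ i)) then b i else a i) = (σ i, x (σ i)) := by
      by_cases hw : x (σ i) = w (σ i)
      · rw [if_pos (decide_eq_true hw), hw, ← hb]
      · have hv : x (σ i) = v (σ i) := (hx (σ i) trivial).resolve_right hw
        rw [if_neg (mt of_decide_eq_true hw), hv, ← ha]
    have hedge : transversal φ x ∈ S.image (transversal φ) := by
      convert hE fun i ↦ decide (x (σ i) = w (σ i)) using 1
      calc transversal φ x = univ.image ((fun i ↦ φ (i, x i)) ∘ σ) := by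
            rw [← image_image, image_univ_equiv, transversal]
        _ = _ := image_congr fun i _ ↦ congrArg φ (hx' i).symm
    exact (transversal_injective φ).mem_finset_image.1 hedge

end Transversal

/-! ### Choice of the field size -/

theorem exists_prime_mul_pow_le_and_le_mul_pow {d s Q n : ℕ} (hd : 0 < d) (hs : s ≠ 0)
    (hQ : Q ≠ 0) (hn : d * (2 * Q) ^ s ≤ n) :
    ∃ q, q.Prime ∧ Q ≤ q ∧ d * q ^ s ≤ n ∧ n ≤ d * (2 * q) ^ s := by
  set r := Nat.nthRoot s (n / d)
  have hQr : 2 * Q ≤ r :=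
    (Nat.le_nthRoot_iff hs).2 ((Nat.le_div_iff_mul_le hd).2 (by rwa [mul_comm]))
  obtain ⟨q, hq, hrq, hqr⟩ := Nat.exists_prime_lt_and_le_two_mul (r / 2) (by omega)
  refine ⟨q, hq, by omega, ?_, ?_⟩
  · calc d * q ^ s ≤ d * (n / d) := by
          gcongr
          exact (Nat.le_nthRoot_iff hs).1 (by omega)
      _ ≤ n := Nat.mul_div_le n d
  · calc n ≤ d * (n / d + 1) := (Nat.lt_mul_div_succ n hd).le
      _ ≤ d * (r + 1) ^ s := by
          gcongr
          exact Nat.lt_pow_nthRoot_add_one hs _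
      _ ≤ d * (2 * q) ^ s := by gcongr; omega

theorem rpow_sub_one_div_mul_le {x C q : ℝ} {d s : ℕ} (hd : 0 < d) (hs : s ≠ 0) (hx : 0 ≤ x)
    (hC : 0 ≤ C) (hq : 0 < q) (hxq : x ≤ C * q ^ s) :
    x ^ ((d : ℝ) - 1 / s) * q ≤ C ^ ((d : ℝ) - 1 / s) * q ^ (d * s) := by
  have hnonneg : 0 ≤ (d : ℝ) - 1 / s := by
    have hd' : (1 : ℝ) ≤ d := mod_cast hd
    have hs' : (1 / s : ℝ) ≤ 1 := by simpa using Nat.cast_inv_le_one s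
    linarith
  have hexp : (s : ℝ) * (d - 1 / s) + 1 = (d * s : ℕ) := by
    push_cast; field_simp; ring
  calc x ^ ((d : ℝ) - 1 / s) * q ≤ (C * q ^ s) ^ ((d : ℝ) - 1 / s) * q := by gcongr
    _ = C ^ ((d : ℝ) - 1 / s) * q ^ ((s : ℝ) * (d - 1 / s) + 1) := by
        rw [Real.mul_rpow hC (by positivity), Real.rpow_add_one hq.ne', Real.rpow_mul hq.le,
          Real.rpow_natCast, mul_assoc]
    _ = C ^ ((d : ℝ) - 1 / s) * q ^ (d * s) := by rw [hexp, Real.rpow_natCast]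

theorem mul_ceil_div_lt {K : Type*} [Field K] [LinearOrder K] [IsStrictOrderedRing K]
    [FloorSemiring K] {a b : K} (ha : 0 ≤ a) (hb : 0 < b) : b * ⌈a / b⌉₊ < a + b := by
  calc b * ⌈a / b⌉₊ < b * (a / b + 1) := by
        gcongr
        exact Nat.ceil_lt_add_one (div_nonneg ha hb.le)
    _ = a + b := by field_simp

/-! ### Box-free hypergraphs -/

theorem exists_hypergraph_not_hasBox_of_prime {d s q n : ℕ} (hs : s ≠ 0)
    (hds : d * s + 2 ≤ 2 ^ d + d) (hq : q.Prime) (hdq : 2 * 4 ^ d ≤ q) (hqn : d * q ^ s ≤ n) :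
    ∃ E : Finset (Finset (Fin n)), (∀ e ∈ E, e.card = d) ∧ ¬ HasBox d n E ∧
      q ^ (d * s) ≤ 2 ^ (d + 1) * q * E.card := by
  have : Fact q.Prime := ⟨hq⟩
  have : NeZero s := ⟨hs⟩
  have hcard : ∏ _i : Fin d, Fintype.card (Fin s → ZMod q) = q ^ (d * s) := by
    simp [ZMod.card, ← pow_mul, mul_comm]
  obtain ⟨S, hS, hSq⟩ := exists_finset_forall_not_spansBox (F := ZMod q)
    (V := fun _ : Fin d ↦ Fin s → ZMod q)
    (by
      rw [hcard, ZMod.card, Fintype.card_fin, ← pow_add]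
      exact Nat.pow_le_pow_right hq.pos hds)
    (by rwa [ZMod.card, Fintype.card_fin])
  rw [hcard, ZMod.card, Fintype.card_fin] at hSq
  obtain ⟨φ⟩ : Nonempty (Fin d × (Fin s → ZMod q) ↪ Fin n) :=
    Function.Embedding.nonempty_of_card_le (by simpa [ZMod.card] using hqn)
  refine ⟨S.image (transversal φ), fun e he ↦ ?_, not_hasBox_image_transversal φ hS, ?_⟩
  · obtain ⟨v, -, rfl⟩ := Finset.mem_image.1 he
    rw [card_transversal, Fintype.card_fin]
  · rwa [Finset.card_image_of_injective _ (transversal_injective φ)]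

theorem exists_hypergraph_not_hasBox_of_mul_add_two_le {d s : ℕ} (hd : 0 < d) (hs : s ≠ 0)
    (hds : d * s + 2 ≤ 2 ^ d + d) :
    ∃ c : ℝ, 0 < c ∧ ∃ N : ℕ, ∀ n : ℕ, N ≤ n →
      ∃ E : Finset (Finset (Fin n)), (∀ e ∈ E, e.card = d) ∧ ¬ HasBox d n E ∧
        c * (n : ℝ) ^ ((d : ℝ) - 1 / s) ≤ E.card := by
  set C : ℝ := (d * 2 ^ s) ^ ((d : ℝ) - 1 / s)
  have : 0 < C := by positivity
  refine ⟨(C * 2 ^ (d + 1))⁻¹, by positivity, d * (2 * (2 * 4 ^ d)) ^ s, fun n hn ↦ ?_⟩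
  obtain ⟨q, hq, hdq, hqn, hnq⟩ := exists_prime_mul_pow_le_and_le_mul_pow hd hs (by positivity) hn
  obtain ⟨E, hE, hbox, hcard⟩ := exists_hypergraph_not_hasBox_of_prime hs hds hq hdq hqn
  refine ⟨E, hE, hbox, ?_⟩
  have hq0 : (0 : ℝ) < q := mod_cast hq.pos
  have hn' : (n : ℝ) ≤ d * 2 ^ s * q ^ s := by
    rw [mul_assoc, ← mul_pow]; exact_mod_cast hnq
  have hcard' : (q : ℝ) ^ (d * s) ≤ 2 ^ (d + 1) * q * E.card := mod_cast hcard
  rw [inv_mul_le_iff₀ (by positivity)]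
  refine le_of_mul_le_mul_right ?_ hq0
  calc (n : ℝ) ^ ((d : ℝ) - 1 / s) * q ≤ C * q ^ (d * s) :=
        rpow_sub_one_div_mul_le hd hs n.cast_nonneg (by positivity) hq0 hn'
    _ ≤ C * (2 ^ (d + 1) * q * E.card) := by gcongr
    _ = C * 2 ^ (d + 1) * E.card * q := by ring

/-- Corollary 3: for any `d ≥ 2`,
`ex_d(n, K_{2,…,2}^{(d)}) = Ω(n^{d - 1/⌈(2^d - 1)/d⌉})`. -/
theorem box_problem_lower_bound_ceil (d : ℕ) (hd : 2 ≤ d) :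
    ∃ c : ℝ, 0 < c ∧ ∃ N : ℕ, ∀ n : ℕ, N ≤ n →
      ∃ E : Finset (Finset (Fin n)),
        (∀ e ∈ E, e.card = d) ∧ ¬ HasBox d n E ∧
        c * (n : ℝ) ^ ((d : ℝ) - 1 / (⌈((2 ^ d - 1 : ℚ)) / (d : ℚ)⌉₊ : ℝ)) ≤ (E.card : ℝ) := by
  have hd0 : 0 < d := by omega
  have hdQ : (0 : ℚ) < d := mod_cast hd0
  have hpow : (0 : ℚ) < 2 ^ d - 1 := sub_pos.2 (one_lt_pow₀ one_lt_two hd0.ne')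
  refine exists_hypergraph_not_hasBox_of_mul_add_two_le hd0 (Nat.ceil_pos.2 (by positivity)).ne' ?_
  have hceil := mul_ceil_div_lt hpow.le hdQ
  have hlt : d * ⌈(2 ^ d - 1 : ℚ) / d⌉₊ + 1 < 2 ^ d + d := by
    qify; linarith
  exact hlt
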